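/- arXiv:1504.02598 — 3 statements merged into one kernel-verified Lean document; each statement's English description precedes it below -/
import Mathlib

section
/- Let n and q be integers with n ≥ 1 and q ≥ 2, and let r be a prime dividing Φ*_n(q). Then n divides r − 1, i.e. r ≡ 1 (mod n). -/
/-- `Phi n q` is the `n`-th cyclotomic polynomial evaluated at `q`. -/
noncomputable def Phi (n q : ℕ) : ℕ :=
  ((Polynomial.cyclotomic n ℤ).eval (q : ℤ)).toNat

/-- `PhiStar n q` is the largest divisor of `Phi n q` that is coprime to
`∏_{k=1}^{n-1} (q^k - 1)` (an empty product is `1`). -/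
noncomputable def PhiStar (n q : ℕ) : ℕ :=
  sSup {m : ℕ | m ∣ Phi n q ∧ Nat.Coprime m (∏ k ∈ Finset.Ico 1 n, (q ^ k - 1))}

/-! If `r ∣ Φ*_n(q)`, then `q` is a root of `Φ_n` modulo `r`, so `q ^ n = 1` modulo `r`, while the
coprimality condition excludes `q ^ k = 1` for `0 < k < n`. So `q` has order exactly `n` modulo `r`,
and for `r` prime this order divides `r - 1`, the order of the unit group of `ZMod r`. -/

open Polynomial

variable {n q r k : ℕ}

theorem natCast_phi (hq : 1 ≤ q) : (Phi n q : ℤ) = (cyclotomic n ℤ).eval (q : ℤ) :=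
  Int.toNat_of_nonneg (cyclotomic_nonneg n (mod_cast hq))

theorem phi_pos (hq : 1 < q) : 0 < Phi n q :=
  Int.lt_toNat.mpr (cyclotomic_pos' n (mod_cast hq))

theorem isRoot_cyclotomic_of_dvd_phi (hq : 1 ≤ q) (hr : r ∣ Phi n q) :
    (cyclotomic n (ZMod r)).IsRoot (q : ZMod r) :=
  calc (cyclotomic n (ZMod r)).eval (q : ZMod r)
      = (((cyclotomic n ℤ).eval (q : ℤ) : ℤ) : ZMod r) := by
        rw [← map_cyclotomic_int, eval_natCast_map, eq_intCast]
    _ = (Phi n q : ZMod r) := by rw [← natCast_phi hq, Int.cast_natCast]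
    _ = 0 := (ZMod.natCast_eq_zero_iff _ _).mpr hr

theorem natCast_pow_eq_one_iff_dvd (hq : 0 < q) :
    (q : ZMod r) ^ k = 1 ↔ r ∣ q ^ k - 1 := by
  rw [← ZMod.natCast_eq_zero_iff, Nat.cast_sub (Nat.one_le_pow k q hq), sub_eq_zero,
    Nat.cast_pow, Nat.cast_one]

theorem isGreatest_phiStar (h : 0 < Phi n q) :
    IsGreatest {m : ℕ | m ∣ Phi n q ∧ m.Coprime (∏ k ∈ Finset.Ico 1 n, (q ^ k - 1))}
      (PhiStar n q) := by
  have bounded : BddAbove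
      {m : ℕ | m ∣ Phi n q ∧ m.Coprime (∏ k ∈ Finset.Ico 1 n, (q ^ k - 1))} :=
    ⟨Phi n q, fun _ hm => Nat.le_of_dvd h hm.1⟩
  exact ⟨Nat.sSup_mem ⟨1, one_dvd _, Nat.coprime_one_left _⟩ bounded,
    fun _ hm => le_csSup bounded hm⟩

theorem phiStar_dvd_phi (n q : ℕ) : PhiStar n q ∣ Phi n q := by
  rcases (Phi n q).eq_zero_or_pos with h | h
  · exact h ▸ dvd_zero _
  · exact (isGreatest_phiStar h).1.1

theorem coprime_phiStar_pow_sub_one (h : 0 < Phi n q) (hk : 0 < k) (hkn : k < n) :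
    (PhiStar n q).Coprime (q ^ k - 1) :=
  Nat.coprime_prod_right_iff.mp (isGreatest_phiStar h).1.2 k (Finset.mem_Ico.mpr ⟨hk, hkn⟩)

theorem isPrimitiveRoot_of_dvd_phiStar (hn : 0 < n) (hq : 1 < q) (hr : r ≠ 1)
    (hdvd : r ∣ PhiStar n q) : IsPrimitiveRoot (q : ZMod r) n := by
  have root : (cyclotomic n (ZMod r)).IsRoot (q : ZMod r) :=
    isRoot_cyclotomic_of_dvd_phi hq.le (hdvd.trans (phiStar_dvd_phi n q))
  refine .mk_of_lt _ hn
    (isRoot_of_unity_of_root_cyclotomic (Nat.mem_divisors_self n hn.ne') root) ?_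
  intro k hk hkn hpow
  have r_dvd : r ∣ q ^ k - 1 := (natCast_pow_eq_one_iff_dvd (Nat.zero_lt_of_lt hq)).mp hpow
  exact hr (Nat.eq_one_of_dvd_coprimes
    (coprime_phiStar_pow_sub_one (phi_pos hq) hk hkn) hdvd r_dvd)

/-- Lemma 2(c): a prime divisor `r` of `Φ*_n(q)` satisfies `r ≡ 1 (mod n)`. -/
theorem prime_dvd_phiStar_mod (n q r : ℕ) (hn : 1 ≤ n) (hq : 2 ≤ q)
    (hr : r.Prime) (hdvd : r ∣ PhiStar n q) :
    n ∣ r - 1 := by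
  have : Fact r.Prime := ⟨hr⟩
  have primitive : IsPrimitiveRoot (q : ZMod r) n :=
    isPrimitiveRoot_of_dvd_phiStar hn hq hr.ne_one hdvd
  rw [primitive.eq_orderOf]
  exact ZMod.orderOf_dvd_card_sub_one (primitive.ne_zero (Nat.one_le_iff_ne_zero.mp hn))
end

section
/- For all integers n ≥ 2 and q ≥ 2, we have q^{φ(n)}/4 < Φ_n(q) < 4·q^{φ(n)}. -/
/-!
Dividing `x ^ d - 1` by its leading term turns Möbius inversion for `∏ d ∣ n, Φ_d = X ^ n - 1` into
`Φ_n(x) / x ^ φ(n) = ∏ d ∣ n, (1 - x⁻¹ ^ d) ^ μ(n / d)`. Every factor `1 - x⁻¹ ^ d` lies in `(0, 1]`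
and every exponent in `{-1, 0, 1}`, so this ratio lies between `P` and `P⁻¹`, where
`P = ∏ d ∣ n, (1 - x⁻¹ ^ d)`. As in Euler's pentagonal number theorem, `P > 1 - x⁻¹ - x⁻²`, and
this is at least `1 / 4` as soon as `x ≥ 2`.
-/

section Products

variable {ι G₀ : Type*} [CommGroupWithZero G₀] [PartialOrder G₀] [ZeroLEOneClass G₀]
  [PosMulMono G₀] [PosMulReflectLT G₀] {s : Finset ι} {a : ι → G₀} {e : ι → ℤ}

theorem prod_le_prod_zpow_of_abs_le_one (ha₀ : ∀ i ∈ s, 0 < a i)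
    (ha₁ : ∀ i ∈ s, a i ≤ 1) (he : ∀ i ∈ s, |e i| ≤ 1) :
    ∏ i ∈ s, a i ≤ ∏ i ∈ s, a i ^ e i := by
  refine Finset.prod_le_prod (fun i hi => (ha₀ i hi).le) fun i hi => ?_
  simpa only [zpow_one] using
    zpow_le_zpow_right_of_le_one₀ (ha₀ i hi) (ha₁ i hi) (abs_le.1 (he i hi)).2

theorem prod_zpow_le_inv_prod_of_abs_le_one (ha₀ : ∀ i ∈ s, 0 < a i)
    (ha₁ : ∀ i ∈ s, a i ≤ 1) (he : ∀ i ∈ s, |e i| ≤ 1) :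
    ∏ i ∈ s, a i ^ e i ≤ (∏ i ∈ s, a i)⁻¹ := by
  rw [← Finset.prod_inv_distrib]
  refine Finset.prod_le_prod (fun i hi => (zpow_pos (ha₀ i hi) _).le) fun i hi => ?_
  simpa only [zpow_neg_one] using
    zpow_le_zpow_right_of_le_one₀ (ha₀ i hi) (ha₁ i hi) (abs_le.1 (he i hi)).1

end Products

section Euler

variable {R : Type*} [CommRing R] [PartialOrder R] [IsStrictOrderedRing R] {x : R}

-- The extra term `x ^ (N + 2)` is what makes the induction on `N` go through.
theorem one_sub_sub_sq_add_pow_le_prod_Icc (hx₀ : 0 ≤ x) (hx₁ : x ≤ 1) (N : ℕ) :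
    1 - x - x ^ 2 + x ^ (N + 2) ≤ ∏ d ∈ Finset.Icc 1 (N + 1), (1 - x ^ d) := by
  induction N with
  | zero => simp
  | succ N ih =>
    have hfactor : 0 ≤ 1 - x ^ (N + 2) := sub_nonneg.2 (pow_le_one₀ hx₀ hx₁)
    have hgap : 0 ≤ x ^ (N + 2) * (x ^ 2 - x ^ (N + 2)) :=
      mul_nonneg (pow_nonneg hx₀ _) (sub_nonneg.2 (pow_le_pow_of_le_one hx₀ hx₁ (by lia)))
    calc 1 - x - x ^ 2 + x ^ (N + 1 + 2)
        ≤ 1 - x - x ^ 2 + x ^ (N + 1 + 2) + x ^ (N + 2) * (x ^ 2 - x ^ (N + 2)) :=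
          le_add_of_nonneg_right hgap
      _ = (1 - x - x ^ 2 + x ^ (N + 2)) * (1 - x ^ (N + 2)) := by ring
      _ ≤ (∏ d ∈ Finset.Icc 1 (N + 1), (1 - x ^ d)) * (1 - x ^ (N + 2)) :=
          mul_le_mul_of_nonneg_right ih hfactor
      _ = ∏ d ∈ Finset.Icc 1 (N + 1 + 1), (1 - x ^ d) :=
          (Finset.prod_Icc_succ_top (by lia) _).symm

theorem one_sub_sub_sq_lt_prod_one_sub_pow (hx₀ : 0 < x) (hx₁ : x ≤ 1) {s : Finset ℕ}
    (hs : ∀ d ∈ s, 0 < d) : 1 - x - x ^ 2 < ∏ d ∈ s, (1 - x ^ d) := by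
  have hsub : s ⊆ Finset.Icc 1 (s.sup id + 1) := fun d hd =>
    Finset.mem_Icc.2 ⟨hs d hd, (Finset.le_sup (f := id) hd).trans (Nat.le_succ _)⟩
  calc 1 - x - x ^ 2 < 1 - x - x ^ 2 + x ^ (s.sup id + 2) :=
        lt_add_of_pos_right _ (pow_pos hx₀ _)
    _ ≤ ∏ d ∈ Finset.Icc 1 (s.sup id + 1), (1 - x ^ d) :=
        one_sub_sub_sq_add_pow_le_prod_Icc hx₀.le hx₁ _
    _ ≤ ∏ d ∈ s, (1 - x ^ d) :=
        Finset.prod_le_prod_of_subset_of_le_one hsub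
          (fun _ _ => sub_nonneg.2 (pow_le_one₀ hx₀.le hx₁))
          (fun _ _ _ => sub_le_self _ (pow_nonneg hx₀.le _))

end Euler

section Cyclotomic

open Polynomial ArithmeticFunction
open scoped ArithmeticFunction.Moebius

theorem prod_divisors_eval_cyclotomic_div_pow_totient {K : Type*} [Field K] {x : K} (hx : x ≠ 0)
    {n : ℕ} (hn : 0 < n) :
    ∏ d ∈ n.divisors, (cyclotomic d K).eval x / x ^ d.totient = 1 - x⁻¹ ^ n := by
  rw [Finset.prod_div_distrib, Finset.prod_pow_eq_pow_sum, Nat.sum_totient, ← eval_prod,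
    prod_cyclotomic_eq_X_pow_sub_one hn, eval_sub, eval_X_pow, eval_one, sub_div,
    div_self (pow_ne_zero n hx), one_div, inv_pow]

theorem eval_cyclotomic_div_pow_totient_eq_prod_moebius {K : Type*} [Field K] {x : K} (hx : x ≠ 0)
    (hx' : ¬ IsOfFinOrder x) {n : ℕ} (hn : 0 < n) :
    (cyclotomic n K).eval x / x ^ n.totient =
      ∏ d ∈ n.divisors, (1 - x⁻¹ ^ d) ^ μ (n / d) := by
  have hpow (m : ℕ) (hm : 0 < m) : x ^ m ≠ 1 := fun h =>
    hx' (isOfFinOrder_iff_pow_eq_one.2 ⟨m, hm, h⟩)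
  rw [← Nat.prod_divisorsAntidiagonal' (f := fun k d => (1 - x⁻¹ ^ d) ^ μ k)]
  refine ((prod_eq_iff_prod_pow_moebius_eq_of_nonzero (fun m hm => ?_) (fun m hm => ?_)).1
    (fun m hm => prod_divisors_eval_cyclotomic_div_pow_totient hx hm) n hn).symm
  · refine div_ne_zero (fun hroot => hpow m hm ?_) (pow_ne_zero _ hx)
    exact isRoot_of_unity_of_root_cyclotomic (Nat.mem_divisors_self m hm.ne') hroot
  · rw [inv_pow, sub_ne_zero, ne_comm, inv_ne_one]
    exact hpow m hm

variable {K : Type*} [Field K] [LinearOrder K] [IsStrictOrderedRing K] {x : K} {n : ℕ}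

theorem eval_cyclotomic_div_pow_totient_mem_Icc (hn : 0 < n) (hx : 1 < x) :
    (cyclotomic n K).eval x / x ^ n.totient ∈
      Set.Icc (∏ d ∈ n.divisors, (1 - x⁻¹ ^ d)) (∏ d ∈ n.divisors, (1 - x⁻¹ ^ d))⁻¹ := by
  have hx₀ : 0 < x := one_pos.trans hx
  have hpos : ∀ d ∈ n.divisors, 0 < 1 - x⁻¹ ^ d := fun d hd =>
    sub_pos.2 (pow_lt_one₀ (inv_pos.2 hx₀).le (inv_lt_one_of_one_lt₀ hx)
      (Nat.pos_of_mem_divisors hd).ne')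
  have hle : ∀ d ∈ n.divisors, 1 - x⁻¹ ^ d ≤ 1 := fun d _ =>
    sub_le_self _ (pow_nonneg (inv_pos.2 hx₀).le d)
  have hord : ¬ IsOfFinOrder x := fun h => hx.ne' (h.eq_one hx₀.le)
  rw [eval_cyclotomic_div_pow_totient_eq_prod_moebius hx₀.ne' hord hn]
  exact ⟨prod_le_prod_zpow_of_abs_le_one hpos hle fun _ _ => abs_moebius_le_one,
    prod_zpow_le_inv_prod_of_abs_le_one hpos hle fun _ _ => abs_moebius_le_one⟩

theorem phi_bounds_general (hn : 0 < n) (hx : 2 ≤ x) :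
    x ^ n.totient / 4 < (cyclotomic n K).eval x ∧
      (cyclotomic n K).eval x < 4 * x ^ n.totient := by
  have hx₀ : 0 < x := two_pos.trans_le hx
  have hinv₀ : 0 < x⁻¹ := inv_pos.2 hx₀
  have hinv : x⁻¹ ≤ 2⁻¹ := inv_anti₀ two_pos hx
  have hprod : 4⁻¹ < ∏ d ∈ n.divisors, (1 - x⁻¹ ^ d) :=
    calc (4⁻¹ : K) ≤ 1 - x⁻¹ - x⁻¹ ^ 2 := by nlinarith
      _ < _ := one_sub_sub_sq_lt_prod_one_sub_pow hinv₀ (by linarith)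
        fun _ => Nat.pos_of_mem_divisors
  obtain ⟨hlower, hupper⟩ :=
    eval_cyclotomic_div_pow_totient_mem_Icc hn (one_lt_two.trans_le hx)
  have hpow : 0 < x ^ n.totient := pow_pos hx₀ _
  constructor
  · rw [div_eq_inv_mul]
    exact (lt_div_iff₀ hpow).1 (hprod.trans_le hlower)
  · exact (div_lt_iff₀ hpow).1 (hupper.trans_lt (inv_lt_of_inv_lt₀ four_pos hprod))

end Cyclotomic

theorem cast_Phi (R : Type*) [Ring R] (n : ℕ) {q : ℕ} (hq : 1 ≤ q) :
    (Phi n q : R) = (Polynomial.cyclotomic n R).eval (q : R) := by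
  have hnonneg : 0 ≤ (Polynomial.cyclotomic n ℤ).eval (q : ℤ) :=
    Polynomial.cyclotomic_nonneg n (mod_cast hq)
  have hcast := Polynomial.cyclotomic.eval_apply (q : ℤ) n (Int.castRingHom R)
  simp only [eq_intCast, Int.cast_natCast] at hcast
  rw [hcast, Phi, ← Int.cast_natCast, Int.toNat_of_nonneg hnonneg]

/-- Lemma 2(f): for all `n ≥ 2` and `q ≥ 2`, `q^φ(n)/4 < Φ_n(q) < 4·q^φ(n)`. -/
theorem phi_bounds (n q : ℕ) (hn : 2 ≤ n) (hq : 2 ≤ q) :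
    (q : ℝ) ^ n.totient / 4 < (Phi n q : ℝ) ∧
    (Phi n q : ℝ) < 4 * (q : ℝ) ^ n.totient := by
  rw [cast_Phi ℝ n (by lia)]
  exact phi_bounds_general (by lia) (mod_cast hq)
end

section
/- Let n and q be integers with n ≥ 2 and q ≥ 2, let f = gcd(Φ_n(q), n), and let f^i be the largest power of f dividing Φ_n(q). Then Φ*_n(q) = Φ_n(q)/f^i. -/
/-!
Let `p` be a prime dividing `Φ_n(a)` and write `n = p ^ k * m` with `p ∤ m`. Modulo `p` the
polynomial `Φ_n` is a power of `Φ_m`, so `a` has order `m` in `(ZMod p)ˣ` and `m ∣ p - 1`.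

* The order `m` is less than `n`, that is `p` divides some `a ^ j - 1` with `0 < j < n`, if and only
  if `p ∣ n`. So the primes to be removed from `Φ_n(a)` are those dividing `gcd(Φ_n(a), n)`.
* Every prime factor of `n` is at most `p`, so `gcd(Φ_n(a), n)` has at most one prime factor.
* If `p ^ 2 ∣ n`, then `Φ_n(a)` divides `Φ_p(z ^ p)` with `z = a ^ (n / p ^ 2)`. When `p` divides
  the latter, `z ≡ 1` modulo `p`, hence `z ^ p ≡ 1` and `Φ_p(z ^ p) ≡ p` modulo `p ^ 2`.
  So `gcd(Φ_n(a), n)` is squarefree, hence `1` or a prime.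
-/

section PrimeFactors

open Polynomial

variable {n p r : ℕ} {a : ℤ}

lemma dvd_eval_cyclotomic_iff_isPrimitiveRoot (hn : n ≠ 0) (hp : p.Prime) :
    (p : ℤ) ∣ (cyclotomic n ℤ).eval a ↔ IsPrimitiveRoot (a : ZMod p) (ordCompl[p] n) := by
  have : Fact p.Prime := ⟨hp⟩
  have : NeZero ((ordCompl[p] n : ℕ) : ZMod p) :=
    ⟨(ZMod.natCast_eq_zero_iff _ _).not.mpr (Nat.not_dvd_ordCompl hp hn)⟩
  rw [← isRoot_cyclotomic_prime_pow_mul_iff_of_charP (k := n.factorization p) (p := p),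
    Nat.ordProj_mul_ordCompl_eq_self, IsRoot.def, ← map_cyclotomic_int n (ZMod p),
    eval_intCast_map, eq_intCast, ZMod.intCast_zmod_eq_zero_iff_dvd, Int.cast_id]

lemma ordCompl_dvd_sub_one_of_dvd_eval_cyclotomic (hn : n ≠ 0) (hp : p.Prime)
    (hpΦ : (p : ℤ) ∣ (cyclotomic n ℤ).eval a) : ordCompl[p] n ∣ p - 1 := by
  have : Fact p.Prime := ⟨hp⟩
  have hprim := (dvd_eval_cyclotomic_iff_isPrimitiveRoot hn hp).mp hpΦ
  have ha : (a : ZMod p) ≠ 0 := (hprim.isUnit (Nat.ordCompl_pos p hn).ne').ne_zero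
  exact hprim.dvd_of_pow_eq_one _ (ZMod.pow_card_sub_one_eq_one ha)

lemma prime_le_of_dvd_eval_cyclotomic (hn : n ≠ 0) (hp : p.Prime) (hr : r.Prime)
    (hpΦ : (p : ℤ) ∣ (cyclotomic n ℤ).eval a) (hrn : r ∣ n) : r ≤ p := by
  by_cases hpr : p ∣ r
  · exact ((Nat.prime_dvd_prime_iff_eq hp hr).mp hpr).ge
  · calc r ≤ ordCompl[p] n :=
          Nat.le_of_dvd (Nat.ordCompl_pos p hn) (Nat.dvd_ordCompl_of_dvd_not_dvd hrn hpr)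
      _ ≤ p - 1 := Nat.le_of_dvd (Nat.sub_pos_of_lt hp.one_lt)
          (ordCompl_dvd_sub_one_of_dvd_eval_cyclotomic hn hp hpΦ)
      _ ≤ p := Nat.sub_le p 1

lemma prime_dvd_prod_pow_sub_one_iff (hn : n ≠ 0) (hp : p.Prime)
    (hpΦ : (p : ℤ) ∣ (cyclotomic n ℤ).eval a) :
    (p : ℤ) ∣ ∏ j ∈ Finset.Ico 1 n, (a ^ j - 1) ↔ p ∣ n := by
  have hprim := (dvd_eval_cyclotomic_iff_isPrimitiveRoot hn hp).mp hpΦ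
  have hdvd_iff (j : ℕ) : (p : ℤ) ∣ a ^ j - 1 ↔ ordCompl[p] n ∣ j := by
    rw [← hprim.pow_eq_one_iff_dvd, ← ZMod.intCast_zmod_eq_zero_iff_dvd, Int.cast_sub,
      Int.cast_pow, Int.cast_one, sub_eq_zero]
  simp only [(Nat.prime_iff_prime_int.mp hp).dvd_finsetProd_iff, Finset.mem_Ico, hdvd_iff]
  constructor
  · rintro ⟨j, ⟨hj, hjn⟩, hdvd⟩
    by_contra hpn
    rw [Nat.factorization_eq_zero_of_not_dvd hpn, pow_zero, Nat.div_one] at hdvd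
    exact hjn.not_ge (Nat.le_of_dvd hj hdvd)
  · intro hpn
    have hne : ordCompl[p] n ≠ n := fun h => Nat.not_dvd_ordCompl hp hn (h.symm ▸ hpn)
    exact ⟨_, ⟨Nat.ordCompl_pos p hn, (Nat.ordCompl_le n p).lt_of_ne hne⟩, dvd_rfl⟩

lemma cyclotomic_mul_dvd_geom_sum (R : Type*) [CommRing R] {k d : ℕ} (hk : 1 < k) (hd : d ≠ 0) :
    cyclotomic (k * d) R ∣ ∑ i ∈ Finset.range k, (X ^ d) ^ i := by
  have hproper : d ∈ (k * d).properDivisors :=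
    Nat.mem_properDivisors.mpr ⟨dvd_mul_left d k, lt_mul_of_one_lt_left hd.bot_lt hk⟩
  have hfactor : (X : R[X]) ^ (k * d) - 1 = (X ^ d - 1) * ∑ i ∈ Finset.range k, (X ^ d) ^ i := by
    rw [mul_geom_sum, ← pow_mul, mul_comm d k]
  have hdvd := X_pow_sub_one_mul_cyclotomic_dvd_X_pow_sub_one_of_dvd R hproper
  have hmonic : (X ^ d - 1 : R[X]).Monic := by simpa using monic_X_pow_sub_C (1 : R) hd
  rw [hfactor] at hdvd
  exact hmonic.isRegular.left.dvd_cancel_left.mp hdvd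

lemma not_sq_dvd_geom_sum_pow_prime (hp : p.Prime) (z : ℤ) :
    ¬ (p : ℤ) ^ 2 ∣ ∑ i ∈ Finset.range p, (z ^ p) ^ i := by
  have : Fact p.Prime := ⟨hp⟩
  intro hsq
  have hz : (p : ℤ) ∣ z - 1 := by
    have h : (p : ℤ) ∣ (z ^ p) ^ p - 1 := by
      rw [← geom_sum_mul]
      exact ((dvd_pow_self _ two_ne_zero).trans hsq).mul_right _
    simpa [← ZMod.intCast_zmod_eq_zero_iff_dvd, ZMod.pow_card] using h
  have hzp : z ^ p ≡ 1 [ZMOD (p : ℤ) ^ 2] := by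
    simpa using (Int.modEq_iff_dvd.mpr (dvd_sub_pow_of_dvd_sub hz 1)).symm
  have hsum : ∑ i ∈ Finset.range p, (z ^ p) ^ i ≡ p [ZMOD (p : ℤ) ^ 2] := by
    simpa using Int.ModEq.sum (s := Finset.range p) fun i _ => hzp.pow i
  have hsq_dvd : p ^ 2 ∣ p := by exact_mod_cast hsum.dvd_iff.mp hsq
  exact (Nat.le_of_dvd hp.pos hsq_dvd).not_gt (lt_self_pow₀ hp.one_lt one_lt_two)

lemma not_sq_dvd_eval_cyclotomic (hn : n ≠ 0) (hp : p.Prime) (hpn : p ^ 2 ∣ n) :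
    ¬ (p : ℤ) ^ 2 ∣ (cyclotomic n ℤ).eval a := by
  obtain ⟨c, rfl⟩ := hpn
  have hpc : p * c ≠ 0 := right_ne_zero_of_mul (a := p) (by rwa [← mul_assoc, ← sq])
  have hdvd : (cyclotomic (p ^ 2 * c) ℤ).eval a ∣ ∑ i ∈ Finset.range p, ((a ^ c) ^ p) ^ i := by
    simpa only [sq, mul_assoc, eval_finsetSum, eval_pow, eval_X, ← pow_mul, mul_comm c p] using
      eval_dvd (x := a) (cyclotomic_mul_dvd_geom_sum ℤ hp.one_lt hpc)
  exact fun hsq => not_sq_dvd_geom_sum_pow_prime hp (a ^ c) (hsq.trans hdvd)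

lemma gcd_eval_cyclotomic_eq_prime (hn : n ≠ 0) (hp : p.Prime)
    (hpΦ : (p : ℤ) ∣ (cyclotomic n ℤ).eval a) (hpn : p ∣ n) :
    Int.gcd ((cyclotomic n ℤ).eval a) n = p := by
  obtain ⟨e, he⟩ : p ∣ Int.gcd ((cyclotomic n ℤ).eval a) n :=
    Int.dvd_gcd hpΦ (Int.natCast_dvd_natCast.mpr hpn)
  suffices e = 1 by rw [he, this, mul_one]
  by_contra hne
  obtain ⟨r, hr, hre⟩ := Nat.exists_prime_and_dvd hne
  have hpr : p * r ∣ Int.gcd ((cyclotomic n ℤ).eval a) n := he ▸ mul_dvd_mul_left p hre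
  have hprΦ : (p : ℤ) * r ∣ (cyclotomic n ℤ).eval a := by
    exact_mod_cast (Int.natCast_dvd_natCast.mpr hpr).trans (Int.gcd_dvd_left ..)
  have hprn : p * r ∣ n :=
    Int.natCast_dvd_natCast.mp ((Int.natCast_dvd_natCast.mpr hpr).trans (Int.gcd_dvd_right ..))
  have hrp : r = p := le_antisymm
    (prime_le_of_dvd_eval_cyclotomic hn hp hr hpΦ (dvd_of_mul_left_dvd hprn))
    (prime_le_of_dvd_eval_cyclotomic hn hr hp (dvd_of_mul_left_dvd hprΦ) hpn)
  rw [hrp, ← sq] at hprΦ hprn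
  exact not_sq_dvd_eval_cyclotomic hn hp hprn hprΦ

end PrimeFactors

lemma isGreatest_dvd_and_coprime {N P M : ℕ} (hN : N ≠ 0) (hPN : P ∣ N) (hcop : (N / P).Coprime M)
    (hPM : ∀ r : ℕ, r.Prime → r ∣ P → r ∣ M) :
    IsGreatest {m : ℕ | m ∣ N ∧ m.Coprime M} (N / P) := by
  refine ⟨⟨Nat.div_dvd_of_dvd hPN, hcop⟩, fun m ⟨hmN, hmM⟩ => ?_⟩
  have hmP : m.Coprime P := Nat.coprime_of_dvd fun r hr hrm hrP =>
    Nat.not_coprime_of_dvd_of_dvd hr.one_lt hrm (hPM r hr hrP) hmM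
  exact Nat.le_of_dvd (Nat.div_pos (Nat.le_of_dvd hN.bot_lt hPN)
    (Nat.pos_of_dvd_of_pos hPN hN.bot_lt)) <|
    (Nat.dvd_div_iff_mul_dvd hPN).mpr (hmP.symm.mul_dvd_of_dvd_of_dvd hPN hmN)

lemma not_dvd_div_of_isGreatest_pow {f N P : ℕ} (hf : 1 < f)
    (hP : IsGreatest {p : ℕ | (∃ i : ℕ, p = f ^ i) ∧ p ∣ N} P) : ¬ f ∣ N / P := by
  obtain ⟨⟨⟨i, rfl⟩, hdvd⟩, hmax⟩ := hP
  intro hf_dvd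
  have hsucc : f ^ (i + 1) ∣ N := (Nat.dvd_div_iff_mul_dvd hdvd).mp hf_dvd
  exact (hmax ⟨⟨i + 1, rfl⟩, hsucc⟩).not_gt (Nat.pow_lt_pow_succ hf)

open Polynomial in
lemma natAbs_eval_cyclotomic_natCast (n : ℕ) {q : ℕ} (hq : 1 ≤ q) :
    ((cyclotomic n ℤ).eval (q : ℤ)).natAbs = Phi n q := by
  have hnonneg := cyclotomic_nonneg n (x := (q : ℤ)) (by exact_mod_cast hq)
  rw [Phi]
  omega

lemma natAbs_prod_natCast_pow_sub_one (s : Finset ℕ) {q : ℕ} (hq : 1 ≤ q) :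
    (∏ k ∈ s, ((q : ℤ) ^ k - 1)).natAbs = ∏ k ∈ s, (q ^ k - 1) := by
  have hcast : ∏ k ∈ s, ((q : ℤ) ^ k - 1) = (∏ k ∈ s, (q ^ k - 1) : ℕ) := by
    simp only [Nat.cast_prod, Nat.cast_sub (Nat.one_le_pow _ q hq), Nat.cast_pow, Nat.cast_one]
  rw [hcast, Int.natAbs_natCast]

open Polynomial in
theorem phiStar_eq_div_gcd_pow_general {n : ℕ} {a : ℤ} {f P : ℕ} (hn : n ≠ 0)
    (hΦ : (cyclotomic n ℤ).eval a ≠ 0) (hf : f = Int.gcd ((cyclotomic n ℤ).eval a) n)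
    (hP : IsGreatest {p : ℕ | (∃ i : ℕ, p = f ^ i) ∧ p ∣ ((cyclotomic n ℤ).eval a).natAbs} P) :
    IsGreatest
      {m : ℕ | m ∣ ((cyclotomic n ℤ).eval a).natAbs ∧
        m.Coprime (∏ k ∈ Finset.Ico 1 n, (a ^ k - 1)).natAbs}
      (((cyclotomic n ℤ).eval a).natAbs / P) := by
  obtain ⟨⟨i, hPf⟩, hPΦ⟩ := hP.1
  have hdvd_prod_iff {r : ℕ} (hr : r.Prime) (hrΦ : r ∣ ((cyclotomic n ℤ).eval a).natAbs) :
      r ∣ (∏ k ∈ Finset.Ico 1 n, (a ^ k - 1)).natAbs ↔ r ∣ n := by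
    rw [← Int.natCast_dvd] at hrΦ ⊢
    exact prime_dvd_prod_pow_sub_one_iff hn hr hrΦ
  apply isGreatest_dvd_and_coprime (Int.natAbs_ne_zero.mpr hΦ) hPΦ
  · refine Nat.coprime_of_dvd fun r hr hr_div hr_prod => ?_
    have hrΦ := hr_div.trans (Nat.div_dvd_of_dvd hPΦ)
    have hrn := (hdvd_prod_iff hr hrΦ).mp hr_prod
    have hfr : f = r :=
      hf.trans (gcd_eval_cyclotomic_eq_prime hn hr (Int.natCast_dvd.mpr hrΦ) hrn)
    exact not_dvd_div_of_isGreatest_pow (hfr ▸ hr.one_lt) hP (hfr ▸ hr_div)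
  · intro r hr hrP
    have hrf : r ∣ f := hr.dvd_of_dvd_pow (hPf ▸ hrP)
    have hrn : r ∣ n := hrf.trans (hf ▸ Int.natCast_dvd_natCast.mp (Int.gcd_dvd_right ..))
    exact (hdvd_prod_iff hr (hrP.trans hPΦ)).mpr hrn

/-- Lemma 4(c): with `f = gcd(Φ_n(q), n)` and `P = f^i` the largest power of `f`
dividing `Φ_n(q)`, we have `Φ*_n(q) = Φ_n(q)/f^i`. -/
theorem phiStar_eq_div_gcd_pow (n q f P : ℕ) (hn : 2 ≤ n) (hq : 2 ≤ q)
    (hf : f = Nat.gcd (Phi n q) n)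
    (hP : IsGreatest {p : ℕ | (∃ i : ℕ, p = f ^ i) ∧ p ∣ Phi n q} P) :
    PhiStar n q = Phi n q / P := by
  have hΦ := natAbs_eval_cyclotomic_natCast n (q := q) (by omega)
  have hprod := natAbs_prod_natCast_pow_sub_one (Finset.Ico 1 n) (q := q) (by omega)
  have hgreatest := phiStar_eq_div_gcd_pow_general (a := q) (by omega)
    (Polynomial.cyclotomic_pos' n (by exact_mod_cast hq)).ne'
    (by rw [hf, Int.gcd, hΦ, Int.natAbs_natCast]) (hΦ ▸ hP)
  rw [hΦ, hprod] at hgreatest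
  exact hgreatest.csSup_eq
end
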